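/- In ℂ², define the three closed curves C₁ = {(e^{4πit}, e^{2πit}) : t ∈ [0,1]}, C₂ = {(e^{6πis}, e^{−4πis}) : s ∈ [0,1]}, and C₃ = {(e^{2πiθ}, e^{−6πiθ}) : θ ∈ [0,1]}, all lying on the torus {(z₁, z₂) ∈ ℂ² : |z₁| = 1, |z₂| = 1}. Then C₁ ∩ C₂ = C₂ ∩ C₃ = C₁ ∩ C₃ = {u_k : 0 ≤ k ≤ 6}, where u_k = (e^{4πik/7}, e^{2πik/7}). -/

import Mathlib

open Real

/-- The curve `C₁ = {(e^{4πit}, e^{2πit}) : t ∈ [0,1]}` on the torus `|z₁| = |z₂| = 1`. -/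
noncomputable def curveC₁ : Set (ℂ × ℂ) :=
  {p | ∃ t ∈ Set.Icc (0 : ℝ) 1,
    p = (Complex.exp ((4 * π * t : ℝ) * Complex.I), Complex.exp ((2 * π * t : ℝ) * Complex.I))}

/-- The curve `C₂ = {(e^{6πis}, e^{−4πis}) : s ∈ [0,1]}` on the torus `|z₁| = |z₂| = 1`. -/
noncomputable def curveC₂ : Set (ℂ × ℂ) :=
  {p | ∃ s ∈ Set.Icc (0 : ℝ) 1,
    p = (Complex.exp ((6 * π * s : ℝ) * Complex.I), Complex.exp ((-4 * π * s : ℝ) * Complex.I))}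

/-- The curve `C₃ = {(e^{2πiθ}, e^{−6πiθ}) : θ ∈ [0,1]}` on the torus `|z₁| = |z₂| = 1`. -/
noncomputable def curveC₃ : Set (ℂ × ℂ) :=
  {p | ∃ θ ∈ Set.Icc (0 : ℝ) 1,
    p = (Complex.exp ((2 * π * θ : ℝ) * Complex.I), Complex.exp ((-6 * π * θ : ℝ) * Complex.I))}

/-- The seven points `u_k = (e^{4πik/7}, e^{2πik/7})`, `0 ≤ k ≤ 6`. -/
noncomputable def uPoint (k : ℕ) : ℂ × ℂ :=
  (Complex.exp ((4 * π * k / 7 : ℝ) * Complex.I), Complex.exp ((2 * π * k / 7 : ℝ) * Complex.I))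


/-- Angles differing by an integral multiple of `2π` have the same exponential. -/
lemma exp_angle_eq (a b : ℝ) (n : ℤ) (h : a = b + n * (2 * π)) :
    Complex.exp ((a : ℝ) * Complex.I) = Complex.exp ((b : ℝ) * Complex.I) := by
  rw [Complex.exp_eq_exp_iff_exists_int]
  refine ⟨n, ?_⟩
  subst h
  push_cast
  ring

lemma fract_mem (x : ℝ) : Int.fract x ∈ Set.Icc (0 : ℝ) 1 :=
  ⟨Int.fract_nonneg x, (Int.fract_lt_one x).le⟩

lemma uPoint_mem₁ (k : ℕ) : uPoint k ∈ curveC₁ := by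
  refine ⟨Int.fract ((k : ℝ) / 7), fract_mem _, ?_⟩
  have h := Int.fract_add_floor ((k : ℝ) / 7)
  refine Prod.ext (exp_angle_eq _ _ (2 * ⌊(k : ℝ) / 7⌋) ?_) (exp_angle_eq _ _ ⌊(k : ℝ) / 7⌋ ?_)
  · push_cast
    linear_combination (-4 * π) * h
  · linear_combination (-2 * π) * h

lemma uPoint_mem₂ (k : ℕ) : uPoint k ∈ curveC₂ := by
  refine ⟨Int.fract (3 * (k : ℝ) / 7), fract_mem _, ?_⟩
  have h := Int.fract_add_floor (3 * (k : ℝ) / 7)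
  refine Prod.ext (exp_angle_eq _ _ (3 * ⌊3 * (k : ℝ) / 7⌋ - k) ?_)
    (exp_angle_eq _ _ (-2 * ⌊3 * (k : ℝ) / 7⌋ + k) ?_)
  · push_cast
    linear_combination (-6 * π) * h
  · push_cast
    linear_combination (4 * π) * h

lemma uPoint_mem₃ (k : ℕ) : uPoint k ∈ curveC₃ := by
  refine ⟨Int.fract (2 * (k : ℝ) / 7), fract_mem _, ?_⟩
  have h := Int.fract_add_floor (2 * (k : ℝ) / 7)
  refine Prod.ext (exp_angle_eq _ _ ⌊2 * (k : ℝ) / 7⌋ ?_)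
    (exp_angle_eq _ _ (-3 * ⌊2 * (k : ℝ) / 7⌋ + k) ?_)
  · linear_combination (-2 * π) * h
  · push_cast
    linear_combination (6 * π) * h

lemma eq_of_mem₁ {p : ℂ × ℂ} (hp : p ∈ curveC₁) : p.1 = p.2 ^ 2 := by
  obtain ⟨t, -, rfl⟩ := hp
  simp only [← Complex.exp_nat_mul]
  congr 1
  push_cast
  ring

lemma eq_of_mem₂ {p : ℂ × ℂ} (hp : p ∈ curveC₂) : p.1 ^ 2 * p.2 ^ 3 = 1 := by
  obtain ⟨t, -, rfl⟩ := hp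
  simp only [← Complex.exp_nat_mul, ← Complex.exp_add]
  rw [← Complex.exp_zero]
  congr 1
  push_cast
  ring

lemma eq_of_mem₃ {p : ℂ × ℂ} (hp : p ∈ curveC₃) : p.1 ^ 3 * p.2 = 1 := by
  obtain ⟨t, -, rfl⟩ := hp
  simp only [← Complex.exp_nat_mul, ← Complex.exp_add]
  rw [← Complex.exp_zero]
  congr 1
  push_cast
  ring

/-- The points `(w², w)` with `w⁷ = 1` are exactly the `u_k`. -/
lemma exists_uPoint {p : ℂ × ℂ} (h1 : p.1 = p.2 ^ 2) (h7 : p.2 ^ 7 = 1) :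
    ∃ k : ℕ, k ≤ 6 ∧ p = uPoint k := by
  obtain ⟨k, hk, hw⟩ :=
    (Complex.isPrimitiveRoot_exp 7 (by norm_num)).eq_pow_of_pow_eq_one h7
  refine ⟨k, by omega, Prod.ext ?_ ?_⟩
  · rw [h1, ← hw]
    simp only [uPoint, ← Complex.exp_nat_mul]
    congr 1
    push_cast
    ring
  · rw [← hw]
    simp only [uPoint, ← Complex.exp_nat_mul]
    congr 1
    push_cast
    ring

/-- The three curves `C₁`, `C₂`, `C₃` all lie on the torus
`{(z₁, z₂) ∈ ℂ² : |z₁| = 1, |z₂| = 1}`, and their pairwise intersections all coincide with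
the seven points `u_k = (e^{4πik/7}, e^{2πik/7})`, `0 ≤ k ≤ 6`. -/
theorem three_curves_intersection :
    (curveC₁ ∪ curveC₂ ∪ curveC₃ ⊆
      {p : ℂ × ℂ | ‖p.1‖ = 1 ∧ ‖p.2‖ = 1}) ∧
    curveC₁ ∩ curveC₂ = {p | ∃ k : ℕ, k ≤ 6 ∧ p = uPoint k} ∧
    curveC₂ ∩ curveC₃ = {p | ∃ k : ℕ, k ≤ 6 ∧ p = uPoint k} ∧
    curveC₁ ∩ curveC₃ = {p | ∃ k : ℕ, k ≤ 6 ∧ p = uPoint k} := by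
  refine ⟨?_, ?_, ?_, ?_⟩
  · rintro p ((⟨t, -, rfl⟩ | ⟨t, -, rfl⟩) | ⟨t, -, rfl⟩) <;>
      exact ⟨Complex.norm_exp_ofReal_mul_I _, Complex.norm_exp_ofReal_mul_I _⟩
  · ext p
    constructor
    · rintro ⟨ha, hb⟩
      have h1 := eq_of_mem₁ ha
      have h2 := eq_of_mem₂ hb
      refine exists_uPoint h1 ?_
      rw [h1] at h2
      linear_combination h2
    · rintro ⟨k, -, rfl⟩
      exact ⟨uPoint_mem₁ k, uPoint_mem₂ k⟩
  · ext p
    constructor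
    · rintro ⟨ha, hb⟩
      have h2 := eq_of_mem₂ ha
      have h3 := eq_of_mem₃ hb
      have h1 : p.1 = p.2 ^ 2 := by
        -- `z = z · (z² w³) = (z³ w) · w² = w²`
        linear_combination (-p.1) * h2 + p.2 ^ 2 * h3
      refine exists_uPoint h1 ?_
      rw [h1] at h3
      linear_combination h3
    · rintro ⟨k, -, rfl⟩
      exact ⟨uPoint_mem₂ k, uPoint_mem₃ k⟩
  · ext p
    constructor
    · rintro ⟨ha, hb⟩
      have h1 := eq_of_mem₁ ha
      have h3 := eq_of_mem₃ hb
      refine exists_uPoint h1 ?_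
      rw [h1] at h3
      linear_combination h3
    · rintro ⟨k, -, rfl⟩
      exact ⟨uPoint_mem₁ k, uPoint_mem₃ k⟩
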